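/- arXiv:1207.5222 — 2 statements merged into one kernel-verified Lean document; each statement's English description precedes it below -/
import Mathlib

section
/- For every n ≥ 0, the n-th Stirling coefficient γ_n satisfies γ_n = Σ_{k=0}^{2n} ((−1)^n 2^{n+k+1} Γ(3n+3/2) / (√π (2n+2k+1)(2n−k)!)) Σ_{j=0}^k ((−1)^j s(2n+k+j, j)/((k−j)! (2n+k+j)!)). -/
open Finset

/-- The unsigned Stirling numbers of the first kind. -/
def stirling1 : ℕ → ℕ → ℕ
  | 0, 0 => 1
  | 0, _ + 1 => 0
  | _ + 1, 0 => 0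
  | n + 1, j + 1 => stirling1 n j + n * stirling1 n (j + 1)

/-- Generalized binomial coefficient `C(ρ, k) = ρ(ρ-1)⋯(ρ-k+1)/k!` for real `ρ`. -/
noncomputable def gbinomR (ρ : ℝ) (k : ℕ) : ℝ :=
  (∏ i ∈ Finset.range k, (ρ - i)) / (Nat.factorial k : ℝ)

/-- The formal power series `F(x) = 2(x - log(1+x))/x² = ∑_{m≥0} 2(-1)^m x^m/(m+2)`. -/
noncomputable def F : PowerSeries ℝ :=
  PowerSeries.mk fun m => 2 * (-1 : ℝ) ^ m / ((m : ℝ) + 2)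

/-- For real `ρ`, the formal power series `F^ρ := ∑_{k≥0} C(ρ,k) (F-1)^k`; since `F - 1`
has zero constant term, the coefficient of `x^n` only involves `k ≤ n`. -/
noncomputable def Fpow (ρ : ℝ) : PowerSeries ℝ :=
  PowerSeries.mk fun n =>
    ∑ k ∈ Finset.range (n + 1), gbinomR ρ k * PowerSeries.coeff n ((F - 1) ^ k)

/-- The `n`-th Stirling coefficient:
`γ_n = ((-1)^n (2n)!/(2^n n!)) · [x^{2n}] F^{-(n+1/2)}`. -/
noncomputable def stirlingCoeff (n : ℕ) : ℝ :=
  ((-1 : ℝ) ^ n * (Nat.factorial (2 * n) : ℝ) / (2 ^ n * (Nat.factorial n : ℝ))) *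
    PowerSeries.coeff (2 * n) (Fpow (-((n : ℝ) + 1 / 2)))

/-- The formal series `log (1+x)`. -/
noncomputable def Lser : PowerSeries ℝ :=
  PowerSeries.mk fun m => if m = 0 then 0 else (-1 : ℝ) ^ (m + 1) / (m : ℝ)

lemma Lser_deriv : (1 + PowerSeries.X) * PowerSeries.derivative ℝ Lser = 1 := by
  ext m
  rw [add_mul, one_mul, map_add]
  cases m with
  | zero => simp [PowerSeries.coeff_derivative, Lser]
  | succ m =>
    rw [PowerSeries.coeff_succ_X_mul, PowerSeries.coeff_derivative, PowerSeries.coeff_derivative]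
    simp only [Lser, PowerSeries.coeff_mk, PowerSeries.coeff_one]
    have h1 : (m : ℝ) + 1 ≠ 0 := by positivity
    have h2 : (m : ℝ) + 1 + 1 ≠ 0 := by positivity
    simp
    field_simp
    ring

lemma Lser_pow_rec (m j : ℕ) :
    ((m : ℝ) + 1) * PowerSeries.coeff (m + 1) (Lser ^ (j + 1))
      + m * PowerSeries.coeff m (Lser ^ (j + 1))
      = ((j : ℝ) + 1) * PowerSeries.coeff m (Lser ^ j) := by
  have h : (1 + PowerSeries.X) * PowerSeries.derivative ℝ (Lser ^ (j + 1))
      = PowerSeries.C ((j : ℝ) + 1) * Lser ^ j := by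
    rw [Derivation.leibniz_pow]
    simp only [Nat.add_sub_cancel, smul_eq_mul, nsmul_eq_mul]
    have := Lser_deriv
    simp only [map_add, map_natCast, map_one]
    push_cast
    linear_combination (((j : PowerSeries ℝ) + 1) * Lser ^ j) * this
  have h2 := congrArg (PowerSeries.coeff m) h
  rw [PowerSeries.coeff_C_mul, add_mul, one_mul, map_add] at h2
  rw [← h2]
  cases m with
  | zero =>
    rw [PowerSeries.coeff_derivative, PowerSeries.coeff_zero_X_mul]
    simp
  | succ m =>
    rw [PowerSeries.coeff_succ_X_mul, PowerSeries.coeff_derivative, PowerSeries.coeff_derivative]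
    push_cast
    ring

lemma Lser_pow_coeff (m : ℕ) : ∀ j : ℕ, PowerSeries.coeff m (Lser ^ j)
    = (Nat.factorial j : ℝ) * (-1) ^ (m + j) * stirling1 m j / Nat.factorial m := by
  induction m with
  | zero =>
    intro j
    cases j with
    | zero => simp [stirling1]
    | succ j => simp [stirling1, Lser]
  | succ m ih =>
    intro j
    cases j with
    | zero => simp [stirling1, PowerSeries.coeff_one]
    | succ j =>
      have h := Lser_pow_rec m j
      rw [ih, ih] at h
      have h1 : (m : ℝ) + 1 ≠ 0 := by positivity
      have h2 : (Nat.factorial m : ℝ) ≠ 0 := by positivity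
      apply mul_left_cancel₀ h1
      rw [eq_sub_of_add_eq h]
      simp only [stirling1, Nat.factorial_succ]
      push_cast
      field_simp
      ring

lemma X_sq_mul_F : PowerSeries.X ^ 2 * F = PowerSeries.C 2 * (-Lser + PowerSeries.X) := by
  ext m
  rw [PowerSeries.coeff_C_mul, PowerSeries.coeff_X_pow_mul', map_add, map_neg,
    PowerSeries.coeff_X]
  rcases m with _ | _ | m
  · simp [Lser]
  · simp [Lser]
  · simp [Lser, F]
    have h2 : (m : ℝ) + 1 + 1 ≠ 0 := by positivity
    have h3 : (m : ℝ) + 2 ≠ 0 := by positivity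
    field_simp
    ring

lemma F_pow_coeff (N i : ℕ) : PowerSeries.coeff N (F ^ i)
    = 2 ^ i * (Nat.factorial i : ℝ) * (-1) ^ (N + i) * ∑ j ∈ Finset.range (i + 1),
      (-1 : ℝ) ^ j * (stirling1 (N + i + j) j : ℝ) /
        ((Nat.factorial (i - j) : ℝ) * (Nat.factorial (N + i + j) : ℝ)) := by
  have h : PowerSeries.coeff N (F ^ i)
      = PowerSeries.coeff (N + 2 * i) ((PowerSeries.X ^ 2 * F) ^ i) := by
    rw [mul_pow, ← pow_mul, PowerSeries.coeff_X_pow_mul]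
  rw [h, X_sq_mul_F, mul_pow, ← map_pow, PowerSeries.coeff_C_mul, add_pow, map_sum,
    Finset.mul_sum, Finset.mul_sum]
  refine Finset.sum_congr rfl fun j hj => ?_
  have hj' : j ≤ i := by simpa [Nat.lt_succ_iff] using hj
  have e : N + 2 * i = (N + i + j) + (i - j) := by omega
  have e2 : (-Lser) ^ j * PowerSeries.X ^ (i - j) * ((i.choose j : ℕ) : PowerSeries ℝ)
      = PowerSeries.C ((-1) ^ j * (i.choose j : ℝ)) * (Lser ^ j * PowerSeries.X ^ (i - j)) := by
    rw [neg_pow]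
    simp only [map_mul, map_pow, map_neg, map_one, map_natCast]
    ring
  rw [e2, PowerSeries.coeff_C_mul, e, PowerSeries.coeff_mul_X_pow, Lser_pow_coeff,
    Nat.cast_choose ℝ hj']
  have h1 : (Nat.factorial j : ℝ) ≠ 0 := by positivity
  have h2 : (Nat.factorial (i - j) : ℝ) ≠ 0 := by positivity
  have h3 : (Nat.factorial (N + i + j) : ℝ) ≠ 0 := by positivity
  field_simp
  rw [pow_add _ (N + i + j) j, pow_add _ (N + i) j]
  rcases neg_one_pow_eq_or ℝ j with h | h <;> rw [h] <;> ring

lemma gbinom_sum (ρ : ℝ) (i N : ℕ) (h : i ≤ N) :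
    (ρ - i) * ∑ k ∈ Finset.range (N + 1), gbinomR ρ k * ((-1) ^ k * (k.choose i : ℝ))
      = (-1) ^ N * (∏ l ∈ Finset.range (N + 1), (ρ - l))
        / ((Nat.factorial i : ℝ) * Nat.factorial (N - i)) := by
  induction N, h using Nat.le_induction with
  | base =>
    rw [Finset.sum_eq_single i]
    · rw [Finset.prod_range_succ]
      simp [gbinomR]
      ring
    · intro b hb hbi
      have : b < i := by
        have := Finset.mem_range.1 hb
        omega
      simp [Nat.choose_eq_zero_of_lt this]
    · simp
  | succ N hN ih =>
    rw [Finset.sum_range_succ, mul_add, ih, Finset.prod_range_succ _ (N + 1), gbinomR,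
      Nat.cast_choose ℝ (show i ≤ N + 1 by omega), Nat.succ_sub hN]
    have e : (N : ℝ) = ((N - i : ℕ) : ℝ) + i := by
      rw [← Nat.cast_add, Nat.sub_add_cancel hN]
    have h1 : (Nat.factorial i : ℝ) ≠ 0 := by positivity
    have h2 : (Nat.factorial (N - i) : ℝ) ≠ 0 := by positivity
    have h3 : (Nat.factorial (N + 1) : ℝ) ≠ 0 := by positivity
    have h4 : ((N - i : ℕ) : ℝ) + 1 ≠ 0 := by positivity
    rw [Nat.factorial_succ (N - i)]
    push_cast
    generalize (∏ l ∈ Finset.range (N + 1), (ρ - l)) = P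
    rw [e]
    field_simp
    ring

lemma Fpow_coeff (ρ : ℝ) (N : ℕ) : PowerSeries.coeff N (Fpow ρ)
    = ∑ i ∈ Finset.range (N + 1), (-1) ^ i * PowerSeries.coeff N (F ^ i) *
      ∑ k ∈ Finset.range (N + 1), gbinomR ρ k * ((-1) ^ k * (k.choose i : ℝ)) := by
  simp only [Fpow, PowerSeries.coeff_mk, Finset.mul_sum]
  rw [Finset.sum_comm]
  refine Finset.sum_congr rfl fun k hk => ?_
  have hk' := Finset.mem_range.1 hk
  have e : (F - 1) ^ k = ∑ i ∈ Finset.range (k + 1),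
      PowerSeries.C ((-1) ^ k * (-1) ^ i * (k.choose i : ℝ)) * F ^ i := by
    rw [show F - 1 = -(-F + 1) by ring, neg_pow, add_pow, Finset.mul_sum]
    refine Finset.sum_congr rfl fun i _ => ?_
    rw [neg_pow]
    simp only [map_mul, map_pow, map_neg, map_one, map_natCast, one_pow]
    ring
  rw [e, map_sum, Finset.mul_sum]
  rw [← Finset.sum_subset (Finset.range_subset_range.2 (show k + 1 ≤ N + 1 by omega))]
  · refine Finset.sum_congr rfl fun i _ => ?_
    rw [PowerSeries.coeff_C_mul]
    ring
  · intro i _ hi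
    have : k < i := by
      simp at hi
      omega
    simp [Nat.choose_eq_zero_of_lt this]

lemma Gamma_prod (a : ℝ) (ha : 0 < a) (m : ℕ) :
    Real.Gamma (a + m) = (∏ l ∈ Finset.range m, (a + l)) * Real.Gamma a := by
  induction m with
  | zero => simp
  | succ m ih =>
    rw [Finset.prod_range_succ, Nat.cast_succ, ← add_assoc, Real.Gamma_add_one (by positivity), ih]
    ring

lemma Gamma_half (n : ℕ) : Real.Gamma ((n : ℝ) + 1 / 2) * (4 ^ n * Nat.factorial n)
    = Nat.factorial (2 * n) * Real.sqrt Real.pi := by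
  induction n with
  | zero => simp [← Real.Gamma_one_half_eq]
  | succ n ih =>
    rw [show ((n + 1 : ℕ) : ℝ) + 1 / 2 = ((n : ℝ) + 1 / 2) + 1 by push_cast; ring,
      Real.Gamma_add_one (by positivity), show 2 * (n + 1) = 2 * n + 1 + 1 by ring,
      Nat.factorial_succ, Nat.factorial_succ, Nat.factorial_succ]
    push_cast
    linear_combination ((2 * (n : ℝ) + 2) * (2 * n + 1)) * ih

/-- New representation of the Stirling coefficients in terms of the unsigned Stirling
numbers of the first kind (formula (18) of the paper). -/
theorem stirlingCoeff_eq_sum_stirling1 (n : ℕ) :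
    stirlingCoeff n =
      ∑ k ∈ Finset.range (2 * n + 1),
        ((-1 : ℝ) ^ n * 2 ^ (n + k + 1) * Real.Gamma (3 * n + 3 / 2) /
            (Real.sqrt Real.pi * (2 * (n : ℝ) + 2 * k + 1) * (Nat.factorial (2 * n - k) : ℝ))) *
          ∑ j ∈ Finset.range (k + 1),
            (-1 : ℝ) ^ j * (stirling1 (2 * n + k + j) j : ℝ) /
              ((Nat.factorial (k - j) : ℝ) * (Nat.factorial (2 * n + k + j) : ℝ)) := by
  rw [stirlingCoeff, Fpow_coeff, Finset.mul_sum]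
  refine Finset.sum_congr rfl fun k hk => ?_
  have hk' : k ≤ 2 * n := by simpa [Nat.lt_succ_iff] using hk
  have hg := gbinom_sum (-((n : ℝ) + 1 / 2)) k (2 * n) hk'
  have hP : ∏ l ∈ Finset.range (2 * n + 1), (-((n : ℝ) + 1 / 2) - l)
      = - ∏ l ∈ Finset.range (2 * n + 1), ((n : ℝ) + 1 / 2 + l) := by
    rw [Finset.prod_congr rfl (fun (l : ℕ) _ =>
      show (-((n : ℝ) + 1 / 2) - l) = (-1) * ((n : ℝ) + 1 / 2 + l) by ring),
      Finset.prod_mul_distrib, Finset.prod_const, Finset.card_range, pow_succ, pow_mul]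
    simp
  have hG := Gamma_prod ((n : ℝ) + 1 / 2) (by positivity) (2 * n + 1)
  rw [show (n : ℝ) + 1 / 2 + ((2 * n + 1 : ℕ) : ℝ) = 3 * n + 3 / 2 by push_cast; ring] at hG
  have hH := Gamma_half n
  rw [hP] at hg
  rw [F_pow_coeff, hG]
  generalize (∏ l ∈ Finset.range (2 * n + 1), ((n : ℝ) + 1 / 2 + l)) = P at *
  generalize (∑ j ∈ Finset.range (k + 1),
            (-1 : ℝ) ^ j * (stirling1 (2 * n + k + j) j : ℝ) /
              ((Nat.factorial (k - j) : ℝ) * (Nat.factorial (2 * n + k + j) : ℝ))) = S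
  generalize (∑ l ∈ Finset.range (2 * n + 1), gbinomR (-((n : ℝ) + 1 / 2)) l *
    ((-1) ^ l * (l.choose k : ℝ))) = Q at *
  have h1 : (Nat.factorial k : ℝ) ≠ 0 := by positivity
  have h2 : (Nat.factorial (2 * n - k) : ℝ) ≠ 0 := by positivity
  have h3 : (Nat.factorial n : ℝ) ≠ 0 := by positivity
  have h4 : (2 * (n : ℝ) + 2 * k + 1) ≠ 0 := by positivity
  have h5 : Real.sqrt Real.pi ≠ 0 := by positivity
  have hQ : Q = 2 * P / ((2 * (n : ℝ) + 2 * k + 1) * (Nat.factorial k * Nat.factorial (2 * n - k))) := by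
    rw [pow_mul] at hg
    field_simp at hg ⊢
    norm_num at hg
    linear_combination -hg
  have hGa : Real.Gamma ((n : ℝ) + 1 / 2)
      = Nat.factorial (2 * n) * Real.sqrt Real.pi / (4 ^ n * Nat.factorial n) := by
    rw [← hH]
    field_simp
  rw [hQ, hGa, show (4 : ℝ) ^ n = 2 ^ n * 2 ^ n by rw [← mul_pow]; norm_num,
    pow_add (-1 : ℝ) (2 * n) k, pow_mul (-1 : ℝ) 2 n, pow_add (2 : ℝ), pow_add (2 : ℝ)]
  norm_num
  field_simp
  rcases neg_one_pow_eq_or ℝ k with h | h <;> rw [h] <;> ring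
end

section
/- For every n ≥ 0, the n-th Stirling coefficient γ_n satisfies γ_n = Σ_{k=0}^{2n} ((−1)^n 2^n Γ(n+k+1/2)/√π) Σ_{j=0}^k (2^j/(k−j)!) Σ_{i=0}^j ((−1)^i S(2n+j+i, i)/((j−i)! (2n+j+i)!)). -/
open Finset

/-- The Stirling numbers of the second kind: `S(0,0) = 1`, `S(n,j) = 0` for `j > n` or
(`n ≥ 1` and `j = 0`), and `S(n+1,j) = S(n,j-1) + j·S(n,j)`. -/
def stirling2 : ℕ → ℕ → ℕ
  | 0, 0 => 1
  | 0, _ + 1 => 0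
  | _ + 1, 0 => 0
  | n + 1, j + 1 => stirling2 n j + (j + 1) * stirling2 n (j + 1)


open PowerSeries

lemma aux_gbinom (r : ℝ) (k : ℕ) : gbinomR r k = Ring.choose r k := by
  have h := Ring.descPochhammer_eq_factorial_smul_choose r k
  have h2 : (descPochhammer ℤ k).smeval r = ∏ i ∈ Finset.range k, (r - i) := by
    induction k with
    | zero => simp
    | succ k ih =>
      rw [descPochhammer_succ_right, Polynomial.smeval_mul, ih
        (Ring.descPochhammer_eq_factorial_smul_choose r k), Finset.prod_range_succ]
      simp [Polynomial.smeval_sub, Polynomial.smeval_natCast]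
  rw [gbinomR, ← h2, h, nsmul_eq_mul]
  have : (Nat.factorial k : ℝ) ≠ 0 := by positivity
  field_simp

/-- Binomial power of a series. -/
noncomputable def bpow (A : PowerSeries ℝ) (r : ℝ) : PowerSeries ℝ :=
  (PowerSeries.binomialSeries ℝ r).subst (A - 1)

lemma hs_of {A : PowerSeries ℝ} (hA : constantCoeff A = 1) : HasSubst (A - 1) :=
  HasSubst.of_constantCoeff_zero' (by simp [hA])

lemma bpow_add {A : PowerSeries ℝ} (hA : constantCoeff A = 1) (r s : ℝ) :
    bpow A (r + s) = bpow A r * bpow A s := by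
  rw [bpow, binomialSeries_add, subst_mul (hs_of hA)]; rfl

lemma bpow_one {A : PowerSeries ℝ} (hA : constantCoeff A = 1) : bpow A 1 = A := by
  have := binomialSeries_nat (R := ℝ) (A := ℝ) 1
  simp only [Nat.cast_one, pow_one] at this
  rw [bpow, this, ← coe_substAlgHom (hs_of hA), map_add, map_one, substAlgHom_X]
  ring

lemma bpow_zero {A : PowerSeries ℝ} (hA : constantCoeff A = 1) : bpow A 0 = 1 := by
  rw [bpow, binomialSeries_zero, ← coe_substAlgHom (hs_of hA), map_one]

lemma coeff_low_pow {A : PowerSeries ℝ} (hA : constantCoeff A = 0) {n k : ℕ} (h : n < k) :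
    coeff n (A ^ k) = 0 := by
  obtain ⟨B, rfl⟩ := X_dvd_iff.2 hA
  rw [mul_pow, coeff_X_pow_mul', if_neg (by omega)]

lemma coeff_bpow {A : PowerSeries ℝ} (hA : constantCoeff A = 1) (r : ℝ) (n : ℕ) :
    coeff n (bpow A r) = ∑ k ∈ Finset.range (n + 1), gbinomR r k * coeff n ((A - 1) ^ k) := by
  rw [bpow, coeff_subst' (hs_of hA), finsum_eq_sum_of_support_subset (s := Finset.range (n + 1))]
  · refine Finset.sum_congr rfl fun k _ => ?_
    simp [aux_gbinom]
  · intro k hk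
    simp only [Function.mem_support] at hk
    by_contra hn
    simp only [Finset.coe_range, Set.mem_Iio, not_lt] at hn
    exact hk (by rw [coeff_low_pow (by simp [hA]) (by omega), smul_zero])

lemma const_bpow {A : PowerSeries ℝ} (hA : constantCoeff A = 1) (r : ℝ) :
    constantCoeff (bpow A r) = 1 := by
  rw [← coeff_zero_eq_constantCoeff_apply, coeff_bpow hA]
  simp [gbinomR]

lemma bpow_half_sq {A : PowerSeries ℝ} (hA : constantCoeff A = 1) :
    bpow A (-(1/2)) ^ 2 * A = 1 := by
  nth_rw 2 [← bpow_one hA]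
  rw [sq, ← bpow_add hA, ← bpow_add hA, ← bpow_zero hA]; norm_num

lemma bpow_half_odd {A : PowerSeries ℝ} (hA : constantCoeff A = 1) (n : ℕ) :
    bpow A (-(1/2)) ^ n = bpow A (-(n/2 : ℝ)) := by
  induction n with
  | zero => simp [bpow_zero hA]
  | succ n ih => rw [pow_succ, ih, ← bpow_add hA]; congr 1; push_cast; ring

/-- `[y^d] (f^d - y f^{d-1} f') = 0`. -/
lemma coeff_res (f : PowerSeries ℝ) (d : ℕ) :
    coeff (d+1) (f ^ (d+1) - X * (f ^ d * derivative ℝ f)) = 0 := by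
  have h := derivative_pow f (d+1)
  have h2 := congrArg (coeff d) h
  rw [coeff_derivative, mul_assoc, ← Nat.cast_succ, ← map_natCast (C (R := ℝ)), coeff_C_mul] at h2
  have hd : ((d : ℝ) + 1) ≠ 0 := by positivity
  rw [map_sub, coeff_succ_X_mul]
  simp only [Nat.add_sub_cancel] at h2
  push_cast at h2
  apply mul_left_cancel₀ hd
  linarith

lemma coeff_change (A e f : PowerSeries ℝ) (hef : e * f = 1) (he : constantCoeff e = 1) (m : ℕ) :
    coeff m (A.subst (X * e) * derivative ℝ (X * e) * f ^ (m+1)) = coeff m A := by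
  have hs : HasSubst (X * e : PowerSeries ℝ) := HasSubst.of_constantCoeff_zero' (by simp)
  have hf : constantCoeff f = 1 := by
    have := congrArg constantCoeff hef
    simpa [he] using this
  have hD : derivative ℝ (X * e) = e + X * derivative ℝ e := by
    rw [Derivation.leibniz]; simp [add_comm]
  have hfe : derivative ℝ e * f ^ 2 = - derivative ℝ f := by
    have := congrArg (derivative ℝ) hef
    rw [Derivation.leibniz] at this
    simp only [smul_eq_mul, derivative_one] at this
    linear_combination f * this - derivative ℝ f * hef
  have key : ∀ d : ℕ, coeff d ((e + X * derivative ℝ e) * f ^ (d+1)) = if d = 0 then 1 else 0 := by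
    intro d
    rcases d with _ | d
    · simp [he, hf]
    · rw [if_neg (by omega), ← coeff_res f d]
      congr 1
      linear_combination f^(d+1) * hef + X * f^d * hfe
  -- split A
  obtain ⟨R, hR⟩ : ∃ R, A = (trunc (m+1) A : PowerSeries ℝ) + X ^ (m+1) * R := by
    obtain ⟨R, hR⟩ := X_pow_dvd_iff.2 (show ∀ i < m+1, coeff i (A - (trunc (m+1) A : PowerSeries ℝ)) = 0 by
      intro i hi
      rw [map_sub, coeff_coe_trunc_of_lt hi, sub_self])
    exact ⟨R, by rw [← hR]; ring⟩
  have hsub : A.subst (X * e) = ∑ k ∈ Finset.range (m+1), C (coeff k A) * (X * e) ^ k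
      + (X * e) ^ (m+1) * R.subst (X * e) := by
    conv_lhs => rw [hR]
    rw [subst_add hs, subst_mul hs, subst_pow hs, subst_X hs, subst_coe hs]
    congr 1
    rw [Polynomial.aeval_eq_sum_range' (natDegree_trunc_lt A m)]
    refine Finset.sum_congr rfl fun k hk => ?_
    rw [coeff_trunc, if_pos (by simpa using hk), smul_eq_C_mul]
  rw [hsub, hD, add_mul, add_mul, map_add]
  have h2 : coeff m ((X * e) ^ (m+1) * R.subst (X * e) * (e + X * derivative ℝ e) * f ^ (m+1)) = 0 := by
    rw [mul_pow, mul_assoc, mul_assoc, mul_assoc, coeff_X_pow_mul', if_neg (by omega)]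
  rw [h2, add_zero, Finset.sum_mul, Finset.sum_mul, map_sum, Finset.sum_eq_single m]
  · have : C (coeff m A) * (X * e) ^ m * (e + X * derivative ℝ e) * f ^ (m+1)
      = C (coeff m A) * (X ^ m * ((e + X * derivative ℝ e) * f ^ (0+1))) * (e*f)^m := by ring
    rw [this, hef, one_pow, mul_one, coeff_C_mul]
    have := key 0
    have h3 := coeff_X_pow_mul ((e + X * derivative ℝ e) * f ^ (0+1)) m 0
    rw [zero_add] at h3
    rw [h3, key]; simp
  · intro k hk hkm
    obtain ⟨d, rfl⟩ : ∃ d, m = d + k := ⟨m - k, by simp at hk; omega⟩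
    have : C (coeff k A) * (X * e) ^ k * (e + X * derivative ℝ e) * f ^ (d+k+1)
      = C (coeff k A) * (X ^ k * ((e + X * derivative ℝ e) * f ^ (d+1))) * (e*f)^k := by ring
    rw [this, hef, one_pow, mul_one, coeff_C_mul, coeff_X_pow_mul, key, if_neg (by omega), mul_zero]
  · simp

/-- `(e^y - 1)/y`. -/
noncomputable def eS : PowerSeries ℝ := PowerSeries.mk fun m => 1 / ((m + 1).factorial : ℝ)

/-- `2(e^y - 1 - y)/y²`. -/
noncomputable def gS : PowerSeries ℝ := PowerSeries.mk fun m => 2 / ((m + 2).factorial : ℝ)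

lemma X_eS : X * eS = exp ℝ - 1 := by
  ext n
  rcases n with _ | n
  · simp
  · rw [coeff_succ_X_mul]; simp [eS, coeff_exp, coeff_one]

lemma X_gS : X * gS = C 2 * (eS - 1) := by
  ext n
  rcases n with _ | n
  · simp [eS]
  · rw [coeff_succ_X_mul, coeff_C_mul]; simp [gS, eS, coeff_one]; rfl

lemma const_eS : constantCoeff eS = 1 := by
  rw [← coeff_zero_eq_constantCoeff_apply]; simp [eS]

lemma const_gS : constantCoeff gS = 1 := by
  rw [← coeff_zero_eq_constantCoeff_apply]; simp [gS]

lemma const_F : constantCoeff F = 1 := by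
  rw [← coeff_zero_eq_constantCoeff_apply]; simp [F]

lemma deriv_XeS : derivative ℝ (X * eS) = 1 + X * eS := by
  rw [X_eS, map_sub, derivative_one, derivative_exp]; ring

lemma deriv_X2gS : derivative ℝ (X ^ 2 * gS) = C 2 * (X * eS) := by
  have : X ^ 2 * gS = C 2 * (X * eS) - C 2 * X := by
    linear_combination X * X_gS
  rw [this, map_sub, Derivation.leibniz, deriv_XeS, Derivation.leibniz]
  simp only [smul_eq_mul, derivative_C, derivative_X]
  ring

lemma deriv_X2F : derivative ℝ (X ^ 2 * F) * (1 + X) = C 2 * X := by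
  ext n
  rw [mul_add, mul_one, map_add, coeff_C_mul]
  have h : ∀ m : ℕ, coeff (m+1) (derivative ℝ (X ^ 2 * F)) = 2 * (-1) ^ m := by
    intro m
    rw [coeff_derivative, show m + 1 + 1 = m + 2 by ring, coeff_X_pow_mul]
    have : (m : ℝ) + 2 ≠ 0 := by positivity
    simp only [F, coeff_mk]
    push_cast
    field_simp
    ring
  have h0 : coeff 0 (derivative ℝ (X ^ 2 * F)) = 0 := by
    rw [coeff_derivative, coeff_X_pow_mul']; simp
  rcases n with _ | n
  · rw [h0]; simp
  · rw [coeff_succ_mul_X]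
    rcases n with _ | n
    · rw [h, h0]; simp
    · rw [h, h]; simp [coeff_X, pow_succ]

lemma hs_E : HasSubst (X * eS : PowerSeries ℝ) := HasSubst.of_constantCoeff_zero' (by simp)

lemma F_subst : (X * eS) ^ 2 * F.subst (X * eS) = X ^ 2 * gS := by
  have h : (X * eS) ^ 2 * F.subst (X * eS) = (X ^ 2 * F).subst (X * eS) := by
    rw [subst_mul hs_E, subst_pow hs_E, subst_X hs_E]
  apply derivative.ext
  · rw [h, derivative_subst hs_E, deriv_XeS, deriv_X2gS]
    have := congrArg (fun A : PowerSeries ℝ => (A.subst (X * eS) : PowerSeries ℝ)) deriv_X2F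
    simp only [← coe_substAlgHom hs_E, map_mul, map_add, map_one, substAlgHom_X] at this
    rw [coe_substAlgHom, subst_C] at this
    exact this
  · simp

lemma const_subst {A B : PowerSeries ℝ} (hB : constantCoeff B = 0) (hA : constantCoeff A = 1) :
    constantCoeff (A.subst B : PowerSeries ℝ) = 1 := by
  have hs : HasSubst B := HasSubst.of_constantCoeff_zero' hB
  obtain ⟨R, hR⟩ := X_dvd_iff.2 (show constantCoeff (A - 1) = 0 by simp [hA])
  have : A = 1 + X * R := by rw [← hR]; ring
  rw [this, ← coe_substAlgHom hs, map_add, map_mul, map_one, substAlgHom_X]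
  simp [hB]

lemma key_coeff (n : ℕ) :
    coeff (2*n) (bpow F (-(1/2)) ^ (2*n+1)) = coeff (2*n) (bpow gS (-(1/2)) ^ (2*n+1)) := by
  set U := bpow F (-(1/2)) with hU
  set V := bpow gS (-(1/2)) with hV
  have hU2 : U ^ 2 * F = 1 := bpow_half_sq const_F
  have hV2 : V ^ 2 * gS = 1 := bpow_half_sq const_gS
  have hU0 : constantCoeff U = 1 := const_bpow const_F _
  have hV0 : constantCoeff V = 1 := const_bpow const_gS _
  have hT2 : (U.subst (X * eS) : PowerSeries ℝ) ^ 2 * F.subst (X * eS) = 1 := by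
    rw [← subst_pow hs_E, ← subst_mul hs_E, hU2, ← coe_substAlgHom hs_E, map_one]
  have hT0 : constantCoeff (U.subst (X * eS) : PowerSeries ℝ) = 1 := const_subst (by simp) hU0
  set T : PowerSeries ℝ := U.subst (X * eS) with hT
  have hTV : T = eS * V := by
    have h1 : X ^ 2 * (T ^ 2 - (eS * V) ^ 2) = 0 := by
      linear_combination (-T^2 * V^2) * F_subst + X^2*eS^2*V^2 * hT2 - X^2 * T^2 * hV2
    have h2 : T ^ 2 - (eS * V) ^ 2 = 0 := by
      rcases mul_eq_zero.1 h1 with h | h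
      · exact absurd h (pow_ne_zero _ X_ne_zero)
      · exact h
    have h3 : (T - eS * V) * (T + eS * V) = 0 := by linear_combination h2
    rcases mul_eq_zero.1 h3 with h | h
    · exact sub_eq_zero.1 h
    · have := congrArg constantCoeff h
      simp [hT0, hV0, const_eS] at this
  have hef : eS * eS⁻¹ = 1 := PowerSeries.mul_inv_cancel _ (by simp [const_eS])
  rw [← coeff_change (U ^ (2*n+1)) eS eS⁻¹ hef const_eS, subst_pow hs_E, ← hT, hTV, deriv_XeS]
  have : (eS * V) ^ (2*n+1) * (1 + X * eS) * eS⁻¹ ^ (2*n+1)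
      = V ^ (2*n+1) + V ^ (2*n+1) * (X * eS) := by
    calc _ = (eS * eS⁻¹) ^ (2*n+1) * (V ^ (2*n+1) * (1 + X * eS)) := by ring
      _ = _ := by rw [hef]; ring
  rw [this, map_add, add_eq_left]
  rcases n with _ | n
  · simp
  · have hd : derivative ℝ gS * V ^ 3 = - (C 2 * derivative ℝ V) := by
      have := congrArg (derivative ℝ) hV2
      rw [Derivation.leibniz, derivative_pow] at this
      simp only [smul_eq_mul, derivative_one] at this
      have hc : (C 2 : PowerSeries ℝ) = 2 := map_ofNat C 2
      rw [hc]
      push_cast at this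
      linear_combination V * this - 2 * derivative ℝ V * hV2
    have hE := deriv_X2gS
    rw [Derivation.leibniz, derivative_pow, derivative_X] at hE
    simp only [smul_eq_mul] at hE
    have hc : (C 2 : PowerSeries ℝ) = 2 := map_ofNat C 2
    rw [hc] at hE hd
    have hres := coeff_res V (2*n)
    have : V ^ (2*(n+1)+1) * (X * eS) = X * (V ^ (2*n+1) - X * (V ^ (2*n) * derivative ℝ V)) := by
      have h2 : (2 : PowerSeries ℝ) ≠ 0 := by
        rw [← hc]
        intro h0
        have := congrArg constantCoeff h0
        simp at this
      apply mul_left_cancel₀ h2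
      push_cast at hE
      linear_combination (-V ^ (2*n+3)) * hE + X^2 * V^(2*n) * hd + 2 * X * V^(2*n+1) * hV2
    rw [this, show 2 * (n+1) = 2*n+1+1 by ring, coeff_succ_X_mul, hres]

lemma coeff_E_pow (i m : ℕ) :
    coeff m ((X * eS) ^ i) = (i.factorial : ℝ) * stirling2 m i / (m.factorial : ℝ) := by
  induction m generalizing i with
  | zero =>
    rcases i with _ | i
    · simp [stirling2]
    · simp [stirling2]
  | succ m ih =>
    rcases i with _ | i
    · simp [stirling2, coeff_one]
    · have h := congrArg (coeff m) (derivative_pow (X * eS) (i+1))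
      rw [coeff_derivative, deriv_XeS, Nat.add_sub_cancel, mul_assoc, ← map_natCast (C (R := ℝ)),
        coeff_C_mul, mul_add ((X * eS) ^ i), mul_one, ← pow_succ, map_add, ih, ih] at h
      have hm : (m : ℝ) + 1 ≠ 0 := by positivity
      have hm' : (m.factorial : ℝ) ≠ 0 := by positivity
      rw [← eq_div_iff hm] at h
      rw [h]
      simp only [stirling2, Nat.factorial_succ]
      push_cast
      field_simp

lemma coeff_eS_pow (i m : ℕ) :
    coeff m (eS ^ i) = (i.factorial : ℝ) * stirling2 (m + i) i / ((m + i).factorial : ℝ) := by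
  rw [← coeff_E_pow, mul_pow, coeff_X_pow_mul]

lemma coeff_term (A : PowerSeries ℝ) (m i l c : ℕ) :
    coeff m ((-A) ^ i * 1 ^ l * (c : PowerSeries ℝ)) = (-1) ^ i * c * coeff m (A ^ i) := by
  have : (-A) ^ i * 1 ^ l * (c : PowerSeries ℝ) = C ((-1 : ℝ) ^ i * c) * A ^ i := by
    rw [neg_pow]; simp; ring
  rw [this, coeff_C_mul]

lemma inner_i (n j : ℕ) : ∑ i ∈ Finset.range (j + 1),
      (-1 : ℝ) ^ i * (stirling2 (n + j + i) i : ℝ) /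
        ((Nat.factorial (j - i) : ℝ) * (Nat.factorial (n + j + i) : ℝ))
    = (-1) ^ j / (2 ^ j * (j.factorial : ℝ)) * coeff n (gS ^ j) := by
  have h1 : C ((-1 : ℝ) ^ j) * (X * gS) ^ j = C (2 ^ j) * (-eS + 1) ^ j := by
    rw [X_gS, map_pow, map_pow, mul_pow, map_neg, map_one, mul_left_comm, ← mul_pow]
    ring
  have h2 := congrArg (coeff (n + j)) h1
  rw [coeff_C_mul, coeff_C_mul, mul_pow, coeff_X_pow_mul, add_pow, map_sum] at h2
  have hj : (j.factorial : ℝ) ≠ 0 := by positivity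
  rw [div_mul_eq_mul_div, h2, mul_div_mul_left _ _ (by positivity), Finset.sum_div]
  refine Finset.sum_congr rfl fun i hi => ?_
  have hij : i ≤ j := by simp at hi; omega
  rw [coeff_term, coeff_eS_pow, Nat.cast_choose ℝ hij]
  have h3 : ((j-i).factorial : ℝ) ≠ 0 := by positivity
  have h4 : (i.factorial : ℝ) ≠ 0 := by positivity
  field_simp

lemma inner_j (n k : ℕ) : ∑ j ∈ Finset.range (k + 1),
      (2 : ℝ) ^ j / (Nat.factorial (k - j) : ℝ) *
        ((-1) ^ j / (2 ^ j * (j.factorial : ℝ)) * coeff n (gS ^ j))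
    = (-1) ^ k / (k.factorial : ℝ) * coeff n ((gS - 1) ^ k) := by
  have h1 : C ((-1 : ℝ) ^ k) * (gS - 1) ^ k = (-gS + 1) ^ k := by
    rw [map_pow, ← mul_pow]; congr 1; simp; ring
  have h2 := congrArg (coeff n) h1
  rw [coeff_C_mul, add_pow, map_sum] at h2
  rw [div_mul_eq_mul_div, h2, Finset.sum_div]
  refine Finset.sum_congr rfl fun i hi => ?_
  have hij : i ≤ k := by simp at hi; omega
  rw [coeff_term, Nat.cast_choose ℝ hij]
  have h3 : ((k-i).factorial : ℝ) ≠ 0 := by positivity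
  have h4 : (i.factorial : ℝ) ≠ 0 := by positivity
  have h5 : (k.factorial : ℝ) ≠ 0 := by positivity
  field_simp

lemma gamma_half (n : ℕ) : Real.Gamma ((n : ℝ) + 1 / 2) =
    (2 * n).factorial / (4 ^ n * n.factorial) * Real.sqrt Real.pi := by
  induction n with
  | zero => simp [-one_div, Real.Gamma_one_half_eq]
  | succ n ih =>
    rw [show ((n + 1 : ℕ) : ℝ) + 1 / 2 = ((n : ℝ) + 1/2) + 1 by push_cast; ring,
      Real.Gamma_add_one (by positivity), ih, show 2 * (n+1) = 2*n+1+1 by ring,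
      Nat.factorial_succ, Nat.factorial_succ, Nat.factorial_succ]
    push_cast
    have h4 : (n.factorial : ℝ) ≠ 0 := by positivity
    field_simp
    ring

lemma gamma_shift (n k : ℕ) : Real.Gamma ((n : ℝ) + k + 1 / 2) * ((-1) ^ k / (k.factorial : ℝ))
    = Real.Gamma ((n : ℝ) + 1 / 2) * gbinomR (-((n : ℝ) + 1 / 2)) k := by
  rw [gbinomR, ← mul_div_assoc, ← mul_div_assoc]
  congr 1
  induction k with
  | zero => simp
  | succ k ih =>
    rw [Finset.prod_range_succ, ← mul_assoc, ← ih,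
      show (n : ℝ) + ((k + 1 : ℕ) : ℝ) + 1 / 2 = ((n : ℝ) + k + 1/2) + 1 by push_cast; ring,
      Real.Gamma_add_one (by positivity)]
    ring

/-- Representation of the Stirling coefficients in terms of the Stirling numbers of the
second kind (formula (22) of the paper). -/
theorem stirlingCoeff_eq_triple_sum_stirling2 (n : ℕ) :
    stirlingCoeff n =
      ∑ k ∈ Finset.range (2 * n + 1),
        ((-1 : ℝ) ^ n * 2 ^ n * Real.Gamma ((n : ℝ) + k + 1 / 2) / Real.sqrt Real.pi) *
          ∑ j ∈ Finset.range (k + 1),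
            (2 : ℝ) ^ j / (Nat.factorial (k - j) : ℝ) *
              ∑ i ∈ Finset.range (j + 1),
                (-1 : ℝ) ^ i * (stirling2 (2 * n + j + i) i : ℝ) /
                  ((Nat.factorial (j - i) : ℝ) * (Nat.factorial (2 * n + j + i) : ℝ)) := by
  have hF : coeff (2*n) (Fpow (-((n : ℝ) + 1 / 2)))
      = coeff (2*n) (bpow gS (-((n : ℝ) + 1 / 2))) := by
    have h := key_coeff n
    rw [bpow_half_odd const_F, bpow_half_odd const_gS] at h
    rw [show -((n : ℝ) + 1 / 2) = -(((2 * n + 1 : ℕ) : ℝ) / 2) by push_cast; ring, ← h,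
      coeff_bpow const_F, Fpow, coeff_mk]
  rw [stirlingCoeff, hF, coeff_bpow const_gS, Finset.mul_sum]
  refine Finset.sum_congr rfl fun k _ => ?_
  simp_rw [inner_i]
  rw [inner_j]
  have hpi : Real.sqrt Real.pi ≠ 0 := by positivity
  have hg := gamma_shift n k
  rw [gamma_half] at hg
  have h4 : (n.factorial : ℝ) ≠ 0 := by positivity
  calc _ = (-1 : ℝ) ^ n * 2 ^ n / Real.sqrt Real.pi *
        ((2 * n).factorial / (4 ^ n * n.factorial) * Real.sqrt Real.pi
          * gbinomR (-((n : ℝ) + 1 / 2)) k) * coeff (2*n) ((gS - 1) ^ k) := by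
        rw [show (4 : ℝ) ^ n = 2 ^ n * 2 ^ n by rw [← mul_pow]; norm_num]
        field_simp
    _ = _ := by rw [← hg]; ring
end
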